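/- Let (X,d) be a proper complete separable metric space with base point x0 and 1 <= p < infinity. Let q: X -> (P_p(X), w_p) be a continuous Markov kernel with M := sup over x in X of w_p(q(x), delta_x) < infinity. Then the map P defined by P(mu)(B) = integral over X of q(x)(B) dmu(x) maps P_p(X) into itself, is continuous as a map (P_p(X), w_p) -> (P_p(X), w_p), is convex linear, and satisfies w_p(P(mu), mu) <= M for every mu in P_p(X); i.e. P is an MW-map of order p relative to the identity with noise level M. -/

import Mathlib

open MeasureTheory Topology Filter Metric Set
open scoped ENNReal NNReal

noncomputable section

variable {X : Type*}

/-- `π` is a coupling of `μ` and `ν`, i.e. a measure on `X × X` with marginals `μ` and `ν`. -/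
def IsCoupling [MeasurableSpace X] (π : Measure (X × X)) (μ ν : Measure X) : Prop :=
  π.map Prod.fst = μ ∧ π.map Prod.snd = ν

/-- The `p`-th power optimal transport cost between `μ` and `ν`. -/
def wCost [MetricSpace X] [MeasurableSpace X] (p : ℝ) (μ ν : Measure X) : ℝ≥0∞ :=
  ⨅ π ∈ {π : Measure (X × X) | IsProbabilityMeasure π ∧ IsCoupling π μ ν},
    ∫⁻ q, ENNReal.ofReal (dist q.1 q.2 ^ p) ∂π

/-- The Wasserstein distance of order `p` (the `p`-th root of the optimal cost), as a real
number. -/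
def Wp [MetricSpace X] [MeasurableSpace X] (p : ℝ) (μ ν : Measure X) : ℝ :=
  ((wCost p μ ν) ^ (1 / p)).toReal

/-- `μ` has finite `p`-th moment about the base point `x₀`. -/
def FiniteMoment [MetricSpace X] [MeasurableSpace X] (p : ℝ) (x₀ : X) (μ : Measure X) : Prop :=
  ∫⁻ x, ENNReal.ofReal (dist x₀ x ^ p) ∂μ < ⊤

/-- The Wasserstein space `P_p(X)`: Borel probability measures with finite `p`-th moment. -/
def Pp [MetricSpace X] [MeasurableSpace X] (p : ℝ) (x₀ : X) : Set (Measure X) :=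
  {μ | IsProbabilityMeasure μ ∧ FiniteMoment p x₀ μ}

/-- The convex combination `t • μ + (1 - t) • ν` of two measures. -/
def mix [MeasurableSpace X] (t : ℝ) (μ ν : Measure X) : Measure X :=
  ENNReal.ofReal t • μ + ENNReal.ofReal (1 - t) • ν

/-- `μₙ → μ` in the weak topology: integrals of bounded continuous functions converge. -/
def WeakConv [MeasurableSpace X] [TopologicalSpace X] (μs : ℕ → Measure X) (μ : Measure X) :
    Prop :=
  ∀ g : BoundedContinuousFunction X ℝ,
    Tendsto (fun n => ∫ x, g x ∂(μs n)) atTop (𝓝 (∫ x, g x ∂μ))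

/-- `μₙ → μ` with respect to the Wasserstein distance of order `p`. -/
def WpTendsto [MetricSpace X] [MeasurableSpace X] (p : ℝ) (μs : ℕ → Measure X)
    (μ : Measure X) : Prop :=
  Tendsto (fun n => Wp p (μs n) μ) atTop (𝓝 0)

/-- A set of measures is sequentially compact for the Wasserstein distance of order `p`. -/
def WpSeqCompact [MetricSpace X] [MeasurableSpace X] (p : ℝ) (S : Set (Measure X)) : Prop :=
  ∀ μs : ℕ → Measure X, (∀ n, μs n ∈ S) →
    ∃ μ ∈ S, ∃ φ : ℕ → ℕ, StrictMono φ ∧ WpTendsto p (fun n => μs (φ n)) μ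

/-- A set of measures is sequentially compact for the weak topology. -/
def WeakSeqCompact [MeasurableSpace X] [TopologicalSpace X] (S : Set (Measure X)) : Prop :=
  ∀ μs : ℕ → Measure X, (∀ n, μs n ∈ S) →
    ∃ μ ∈ S, ∃ φ : ℕ → ℕ, StrictMono φ ∧ WeakConv (fun n => μs (φ n)) μ

/-!
`W_p`-convergence of measures with finite `p`-th moment is equivalent to convergence of the
integrals of all continuous functions of growth at most `1 + d(x₀, ·) ^ p`. A kernel moving every
point by at most `M` in `W_p` acts on such functions by `f ↦ ∫ f dq(·)`: the growth bound survives
because the displacement is bounded, continuity because `q` is `W_p`-continuous. By duality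
`μ ↦ μ.bind q` is `W_p`-continuous. Since `(q(x), x)`, with `x ∼ μ`, couples `μ.bind q` with `μ`,
the noise level is again `M`.

For the harder half of the equivalence, cut `X` into countably many small cells with `μ`-null
frontier. Weak convergence makes the masses that `μₙ` and `μ` share in the cells converge to `1`;
this mass travels at most one cell diameter, and convergence of the moments makes the rest cheap.
-/

/-! ### Moments, transport costs and couplings -/

/-- The `p`-th moment of `μ` about `x₀`, allowed to be infinite; `FiniteMoment` says that it is
finite. -/
def pthMoment [PseudoEMetricSpace X] [MeasurableSpace X] (p : ℝ) (x₀ : X) (μ : Measure X) :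
    ℝ≥0∞ :=
  ∫⁻ x, edist x₀ x ^ p ∂μ

/-- The `p`-th power cost of a transport plan; `wCost` is its infimum over couplings. -/
def transportCost [PseudoEMetricSpace X] [MeasurableSpace X] (p : ℝ) (π : Measure (X × X)) :
    ℝ≥0∞ :=
  ∫⁻ z, edist z.1 z.2 ^ p ∂π

theorem ofReal_dist_rpow [PseudoMetricSpace X] {p : ℝ} (hp : 0 ≤ p) (x y : X) :
    ENNReal.ofReal (dist x y ^ p) = edist x y ^ p := by
  rw [edist_dist, ENNReal.ofReal_rpow_of_nonneg dist_nonneg hp]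

theorem finiteMoment_iff_pthMoment_lt_top [MetricSpace X] [MeasurableSpace X] {p : ℝ} (hp : 0 ≤ p)
    {x₀ : X} {μ : Measure X} : FiniteMoment p x₀ μ ↔ pthMoment p x₀ μ < ⊤ := by
  simp only [FiniteMoment, pthMoment, ofReal_dist_rpow hp]

theorem pthMoment_ne_top_of_mem_Pp [MetricSpace X] [MeasurableSpace X] {p : ℝ} (hp : 0 ≤ p)
    {x₀ : X} {μ : Measure X} (hμ : μ ∈ Pp p x₀) : pthMoment p x₀ μ ≠ ⊤ :=
  ((finiteMoment_iff_pthMoment_lt_top hp).1 hμ.2).ne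

theorem wCost_eq_iInf_transportCost [MetricSpace X] [MeasurableSpace X] {p : ℝ} (hp : 0 ≤ p)
    (μ ν : Measure X) :
    wCost p μ ν = ⨅ π ∈ {π : Measure (X × X) | IsProbabilityMeasure π ∧ IsCoupling π μ ν},
      transportCost p π := by
  simp only [wCost, transportCost, ofReal_dist_rpow hp]

namespace IsCoupling

variable [MeasurableSpace X] {π : Measure (X × X)} {μ ν : Measure X}

theorem isProbabilityMeasure [IsProbabilityMeasure μ] (h : IsCoupling π μ ν) :
    IsProbabilityMeasure π :=
  ⟨by rw [← preimage_univ (f := Prod.fst), ← Measure.map_apply measurable_fst .univ, h.1,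
    measure_univ]⟩

theorem lintegral_fst (h : IsCoupling π μ ν) {f : X → ℝ≥0∞} (hf : Measurable f) :
    ∫⁻ z, f z.1 ∂π = ∫⁻ x, f x ∂μ := by
  rw [← h.1, lintegral_map hf measurable_fst]

theorem lintegral_snd (h : IsCoupling π μ ν) {f : X → ℝ≥0∞} (hf : Measurable f) :
    ∫⁻ z, f z.2 ∂π = ∫⁻ x, f x ∂ν := by
  rw [← h.2, lintegral_map hf measurable_snd]

theorem prod [IsProbabilityMeasure μ] [IsProbabilityMeasure ν] :
    IsCoupling (μ.prod ν) μ ν := by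
  simp [IsCoupling, Measure.map_fst_prod, Measure.map_snd_prod]

theorem add {π' : Measure (X × X)} {μ' ν' : Measure X} (h : IsCoupling π μ ν)
    (h' : IsCoupling π' μ' ν') : IsCoupling (π + π') (μ + μ') (ν + ν') := by
  constructor
  · rw [Measure.map_add _ _ measurable_fst, h.1, h'.1]
  · rw [Measure.map_add _ _ measurable_snd, h.2, h'.2]

theorem wCost_le [MetricSpace X] [IsProbabilityMeasure μ] (h : IsCoupling π μ ν) {p : ℝ}
    (hp : 0 ≤ p) : wCost p μ ν ≤ transportCost p π := by
  rw [wCost_eq_iInf_transportCost hp]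
  exact iInf₂_le π ⟨h.isProbabilityMeasure, h⟩

end IsCoupling

/-- The infimum defining `wCost` is a limit of costs of couplings, so closed conditions on the cost
pass to it. -/
theorem wCost_mem_of_isClosed [MetricSpace X] [MeasurableSpace X] {p : ℝ} (hp : 0 ≤ p)
    {μ ν : Measure X} [IsProbabilityMeasure μ] [IsProbabilityMeasure ν] {T : Set ℝ≥0∞}
    (hT : IsClosed T) (h : ∀ π, IsCoupling π μ ν → transportCost p π ∈ T) : wCost p μ ν ∈ T := by
  rw [wCost_eq_iInf_transportCost hp, ← sInf_image]
  refine closure_minimal ?_ hT (sInf_mem_closure ?_)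
  · rintro _ ⟨π, hπ, rfl⟩
    exact h π hπ.2
  · exact Set.Nonempty.image _ ⟨μ.prod ν, inferInstance, .prod⟩

/-! ### Lower bounds for the transport cost -/

theorem lintegral_edist_le_rpow_transportCost [PseudoEMetricSpace X] [MeasurableSpace X]
    [OpensMeasurableSpace X] [SecondCountableTopology X] {p : ℝ} (hp : 1 ≤ p)
    (π : Measure (X × X)) [IsProbabilityMeasure π] :
    ∫⁻ z, edist z.1 z.2 ∂π ≤ transportCost p π ^ (1 / p) := by
  have h := eLpNorm'_le_eLpNorm'_of_exponent_le (f := fun z : X × X => edist z.1 z.2)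
    zero_lt_one hp π (by fun_prop)
  simpa [eLpNorm', transportCost] using h

section LowerBounds

variable [MetricSpace X] [MeasurableSpace X] [OpensMeasurableSpace X] [SecondCountableTopology X]
  {p : ℝ} {μ ν : Measure X}

/-- Minkowski's inequality: the `p`-th root of the moment about `x₀` is the distance to
`δ_{x₀}`. -/
theorem rpow_pthMoment_le_add_rpow_wCost [IsProbabilityMeasure μ] [IsProbabilityMeasure ν]
    (hp : 1 ≤ p) (x₀ : X) :
    pthMoment p x₀ μ ^ (1 / p) ≤ pthMoment p x₀ ν ^ (1 / p) + wCost p μ ν ^ (1 / p) := by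
  refine wCost_mem_of_isClosed (zero_le_one.trans hp)
    (T := {c | pthMoment p x₀ μ ^ (1 / p) ≤ pthMoment p x₀ ν ^ (1 / p) + c ^ (1 / p)})
    (isClosed_le (by fun_prop) (by fun_prop)) fun π hπ => ?_
  have hm : Measurable fun x : X => edist x₀ x ^ p := by fun_prop
  rw [Set.mem_ofPred_eq, pthMoment, pthMoment, ← hπ.lintegral_fst hm, ← hπ.lintegral_snd hm]
  calc (∫⁻ z, edist x₀ z.1 ^ p ∂π) ^ (1 / p)
      ≤ (∫⁻ z, (edist x₀ z.2 + edist z.1 z.2) ^ p ∂π) ^ (1 / p) := by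
        gcongr with z
        exact edist_comm z.1 z.2 ▸ edist_triangle x₀ z.2 z.1
    _ ≤ _ := ENNReal.lintegral_Lp_add_le (f := fun z : X × X => edist x₀ z.2)
        (g := fun z : X × X => edist z.1 z.2) (by fun_prop) (by fun_prop) hp

theorem pthMoment_le_wCost_dirac [IsProbabilityMeasure μ] (hp : 1 ≤ p) (x : X) :
    pthMoment p x μ ≤ wCost p μ (Measure.dirac x) := by
  have hp0 : 0 < p := zero_lt_one.trans_le hp
  have h := rpow_pthMoment_le_add_rpow_wCost (μ := μ) (ν := Measure.dirac x) hp x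
  have hdirac : pthMoment p x (Measure.dirac x) = 0 := by
    rw [pthMoment, lintegral_dirac' _ (by fun_prop), edist_self, ENNReal.zero_rpow_of_pos hp0]
  rwa [hdirac, ENNReal.zero_rpow_of_pos (by positivity), zero_add,
    ENNReal.rpow_le_rpow_iff (by positivity)] at h

/-- The easy half of Kantorovich duality. -/
theorem edist_integral_le_mul_rpow_wCost [IsProbabilityMeasure μ] [IsProbabilityMeasure ν]
    (hp : 1 ≤ p) {f : X → ℝ} {L : ℝ≥0} (hf : LipschitzWith L f) (hμ : Integrable f μ)
    (hν : Integrable f ν) :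
    edist (∫ x, f x ∂μ) (∫ x, f x ∂ν) ≤ L * wCost p μ ν ^ (1 / p) := by
  refine wCost_mem_of_isClosed (zero_le_one.trans hp)
    (T := {c | edist (∫ x, f x ∂μ) (∫ x, f x ∂ν) ≤ L * c ^ (1 / p)})
    (isClosed_le continuous_const ((ENNReal.continuous_const_mul ENNReal.coe_ne_top).comp
      ENNReal.continuous_rpow_const)) ?_
  rintro π ⟨rfl, rfl⟩
  have := IsCoupling.isProbabilityMeasure (π := π) ⟨rfl, rfl⟩
  have hfst : Integrable (fun z : X × X => f z.1) π := hμ.comp_measurable measurable_fst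
  have hsnd : Integrable (fun z : X × X => f z.2) π := hν.comp_measurable measurable_snd
  rw [Set.mem_ofPred_eq, integral_map measurable_fst.aemeasurable hμ.aestronglyMeasurable,
    integral_map measurable_snd.aemeasurable hν.aestronglyMeasurable, edist_eq_enorm_sub,
    ← integral_sub hfst hsnd]
  calc ‖∫ z, (f z.1 - f z.2) ∂π‖ₑ
      ≤ ∫⁻ z, ‖f z.1 - f z.2‖ₑ ∂π := enorm_integral_le_lintegral_enorm _
    _ ≤ ∫⁻ z, L * edist z.1 z.2 ∂π :=
        lintegral_mono fun z => (edist_eq_enorm_sub (f z.1) (f z.2)).symm.trans_le (hf _ _)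
    _ = L * ∫⁻ z, edist z.1 z.2 ∂π := lintegral_const_mul _ (by fun_prop)
    _ ≤ L * transportCost p π ^ (1 / p) := by
        gcongr
        exact lintegral_edist_le_rpow_transportCost hp π

end LowerBounds

/-! ### Upper bounds for the transport cost -/

/-- The independent coupling of two measures of equal finite mass. When that mass is zero the
product vanishes, so the factor `∞` is harmless. -/
def normalizedProd [MeasurableSpace X] (α β : Measure X) : Measure (X × X) :=
  (α univ)⁻¹ • α.prod β

theorem inv_smul_smul_measure_univ [MeasurableSpace X] (α : Measure X) [IsFiniteMeasure α] :
    (α univ)⁻¹ • α univ • α = α := by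
  rcases eq_or_ne α 0 with rfl | hα
  · simp
  · rw [smul_smul, ENNReal.inv_mul_cancel (by simpa using hα) (measure_ne_top α univ), one_smul]

theorem isCoupling_normalizedProd [MeasurableSpace X] {α β : Measure X} [IsFiniteMeasure α]
    [IsFiniteMeasure β] (h : α univ = β univ) : IsCoupling (normalizedProd α β) α β := by
  constructor
  · rw [normalizedProd, Measure.map_smul, Measure.map_fst_prod, ← h, inv_smul_smul_measure_univ]
  · rw [normalizedProd, Measure.map_smul, Measure.map_snd_prod, h, inv_smul_smul_measure_univ]

theorem edist_rpow_le_mul_add [PseudoEMetricSpace X] {p : ℝ} (hp : 1 ≤ p) (x₀ x y : X) :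
    edist x y ^ p ≤ 2 ^ (p - 1) * (edist x₀ x ^ p + edist x₀ y ^ p) :=
  calc edist x y ^ p ≤ (edist x₀ x + edist x₀ y) ^ p := by
        gcongr
        exact edist_triangle_left x y x₀
    _ ≤ _ := ENNReal.rpow_add_le_mul_rpow_add_rpow _ _ hp

theorem transportCost_normalizedProd_le [PseudoEMetricSpace X] [MeasurableSpace X]
    [OpensMeasurableSpace X] {p : ℝ} (hp : 1 ≤ p) (x₀ : X) {α β : Measure X}
    [IsFiniteMeasure α] [IsFiniteMeasure β] (h : α univ = β univ) :
    transportCost p (normalizedProd α β) ≤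
      2 ^ (p - 1) * (pthMoment p x₀ α + pthMoment p x₀ β) := by
  have hm : Measurable fun x : X => edist x₀ x ^ p := by fun_prop
  have hπ := isCoupling_normalizedProd h
  calc transportCost p (normalizedProd α β)
      ≤ ∫⁻ z, 2 ^ (p - 1) * (edist x₀ z.1 ^ p + edist x₀ z.2 ^ p) ∂normalizedProd α β :=
        lintegral_mono fun z => edist_rpow_le_mul_add hp x₀ z.1 z.2
    _ = 2 ^ (p - 1) * (pthMoment p x₀ α + pthMoment p x₀ β) := by
        rw [lintegral_const_mul _ (by fun_prop), lintegral_add_left (by fun_prop),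
          hπ.lintegral_fst hm, hπ.lintegral_snd hm, pthMoment, pthMoment]

/-- A measure whose marginals are dominated by `μ` and `ν` extends to a coupling by transporting
the remaining mass independently. -/
theorem wCost_le_add_of_map_le [MetricSpace X] [MeasurableSpace X] [OpensMeasurableSpace X]
    {p : ℝ} (hp : 1 ≤ p) (x₀ : X) {μ ν : Measure X} [IsProbabilityMeasure μ]
    [IsProbabilityMeasure ν] {σ : Measure (X × X)} (h₁ : σ.map Prod.fst ≤ μ)
    (h₂ : σ.map Prod.snd ≤ ν) :
    wCost p μ ν ≤ transportCost p σ +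
      2 ^ (p - 1) *
        (pthMoment p x₀ (μ - σ.map Prod.fst) + pthMoment p x₀ (ν - σ.map Prod.snd)) := by
  have := isFiniteMeasure_of_le μ h₁
  have := isFiniteMeasure_of_le ν h₂
  have hmass : (μ - σ.map Prod.fst) univ = (ν - σ.map Prod.snd) univ := by
    rw [Measure.sub_apply .univ h₁, Measure.sub_apply .univ h₂,
      Measure.map_apply measurable_fst .univ, Measure.map_apply measurable_snd .univ,
      preimage_univ, preimage_univ, measure_univ (μ := μ), measure_univ (μ := ν)]
  have hπ := (isCoupling_normalizedProd hmass).add (μ' := σ.map Prod.fst) ⟨rfl, rfl⟩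
  rw [Measure.sub_add_cancel_of_le h₁, Measure.sub_add_cancel_of_le h₂] at hπ
  calc wCost p μ ν ≤ transportCost p (_ + σ) := hπ.wCost_le (zero_le_one.trans hp)
    _ = transportCost p σ + transportCost p (normalizedProd _ _) :=
        (lintegral_add_measure _ _ _).trans (add_comm _ _)
    _ ≤ _ := by
        gcongr
        exact transportCost_normalizedProd_le hp x₀ hmass

theorem wCost_ne_top [MetricSpace X] [MeasurableSpace X] [OpensMeasurableSpace X]
    {p : ℝ} (hp : 1 ≤ p) {x₀ : X} {μ ν : Measure X} (hμ : μ ∈ Pp p x₀) (hν : ν ∈ Pp p x₀) :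
    wCost p μ ν ≠ ⊤ := by
  have := hμ.1
  have := hν.1
  have hp0 : 0 ≤ p := zero_le_one.trans hp
  have hmoments := ENNReal.add_ne_top.2
    ⟨pthMoment_ne_top_of_mem_Pp hp0 hμ, pthMoment_ne_top_of_mem_Pp hp0 hν⟩
  have hmass : μ univ = ν univ := by rw [measure_univ, measure_univ]
  exact ne_top_of_le_ne_top (ENNReal.mul_ne_top (by finiteness) hmoments)
    (((isCoupling_normalizedProd hmass).wCost_le hp0).trans
      (transportCost_normalizedProd_le hp x₀ hmass))

theorem pthMoment_le_of_le [PseudoEMetricSpace X] [MeasurableSpace X] (p : ℝ) (x₀ : X)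
    {α μ : Measure X} (h : α ≤ μ) (R : ℝ≥0∞) :
    pthMoment p x₀ α ≤ R * α univ + ∫⁻ x, (edist x₀ x ^ p - R) ∂μ :=
  calc pthMoment p x₀ α ≤ ∫⁻ x, (R + (edist x₀ x ^ p - R)) ∂α :=
        lintegral_mono fun _ => le_add_tsub
    _ = R * α univ + ∫⁻ x, (edist x₀ x ^ p - R) ∂α := by
        rw [lintegral_add_left measurable_const, lintegral_const]
    _ ≤ _ := by gcongr

section Cells

variable [MeasurableSpace X] {ι : Type*} {A : ι → Set X}

/-- The plan moving, independently inside each cell `A i`, as much mass as `μ` and `ν` share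
there. -/
def cellPlan (A : ι → Set X) (μ ν : Measure X) : Measure (X × X) :=
  Measure.sum fun i =>
    (max (μ (A i)) (ν (A i)))⁻¹ • (μ.restrict (A i)).prod (ν.restrict (A i))

theorem sum_smul_restrict_le [Countable ι] (μ : Measure X) (hA : ∀ i, MeasurableSet (A i))
    (hdisj : Pairwise (Function.onFun Disjoint A)) {w : ι → ℝ≥0∞} (hw : ∀ i, w i ≤ 1) :
    Measure.sum (fun i => w i • μ.restrict (A i)) ≤ μ :=
  calc Measure.sum (fun i => w i • μ.restrict (A i))
      ≤ Measure.sum fun i => μ.restrict (A i) := by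
        refine Measure.le_iff.2 fun t ht => ?_
        simp only [Measure.sum_apply _ ht, Measure.smul_apply, smul_eq_mul]
        exact ENNReal.tsum_le_tsum fun i => mul_le_of_le_one_left zero_le (hw i)
    _ = μ.restrict (⋃ i, A i) := (Measure.restrict_iUnion hdisj hA).symm
    _ ≤ μ := Measure.restrict_le_self

theorem map_fst_cellPlan_le [Countable ι] (μ ν : Measure X) [SFinite ν]
    (hA : ∀ i, MeasurableSet (A i)) (hdisj : Pairwise (Function.onFun Disjoint A)) :
    (cellPlan A μ ν).map Prod.fst ≤ μ := by
  simp only [cellPlan, Measure.map_sum measurable_fst.aemeasurable, Measure.map_smul,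
    Measure.map_fst_prod, Measure.restrict_apply_univ, smul_smul]
  refine sum_smul_restrict_le μ hA hdisj fun i => ?_
  grw [← le_max_right, ENNReal.inv_mul_le_one]

theorem map_snd_cellPlan_le [Countable ι] (μ ν : Measure X) [SFinite ν]
    (hA : ∀ i, MeasurableSet (A i)) (hdisj : Pairwise (Function.onFun Disjoint A)) :
    (cellPlan A μ ν).map Prod.snd ≤ ν := by
  simp only [cellPlan, Measure.map_sum measurable_snd.aemeasurable, Measure.map_smul,
    Measure.map_snd_prod, Measure.restrict_apply_univ, smul_smul]
  refine sum_smul_restrict_le ν hA hdisj fun i => ?_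
  grw [← le_max_left, ENNReal.inv_mul_le_one]

theorem cellPlan_univ (A : ι → Set X) (μ ν : Measure X) [IsFiniteMeasure μ] [IsFiniteMeasure ν] :
    cellPlan A μ ν univ = ∑' i, min (μ (A i)) (ν (A i)) := by
  rw [cellPlan, Measure.sum_apply _ .univ]
  refine tsum_congr fun i => ?_
  rw [Measure.smul_apply, ← univ_prod_univ, Measure.prod_prod, Measure.restrict_apply_univ,
    Measure.restrict_apply_univ, ← max_mul_min, smul_eq_mul]
  exact ENNReal.inv_mul_cancel_left' (fun h => nonpos_iff_eq_zero.1 (h ▸ min_le_max))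
    fun h => absurd h (max_lt (measure_lt_top μ _) (measure_lt_top ν _)).ne

end Cells

theorem transportCost_cellPlan_le [PseudoEMetricSpace X] [MeasurableSpace X] {ι : Type*}
    [Countable ι] {A : ι → Set X} {p : ℝ} (hp : 0 ≤ p) (μ ν : Measure X) [SFinite μ] [SFinite ν]
    (hA : ∀ i, MeasurableSet (A i)) {ε : ℝ≥0∞} (hε : ∀ i, ediam (A i) ≤ ε) :
    transportCost p (cellPlan A μ ν) ≤ ε ^ p * cellPlan A μ ν univ := by
  rw [← lintegral_const]
  refine lintegral_mono_ae ?_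
  rw [cellPlan, Measure.ae_sum_iff]
  intro i
  refine Measure.ae_smul_measure ?_ _
  rw [Measure.prod_restrict]
  refine ae_restrict_of_forall_mem ((hA i).prod (hA i)) fun z hz => ?_
  gcongr
  exact (edist_le_ediam_of_mem hz.1 hz.2).trans (hε i)

/-- Shared mass inside the cells travels at most `ε`; the rest is controlled by its amount `θ` and
by the tails of the `p`-th moments. -/
theorem wCost_le_of_disjoint_cells [MetricSpace X] [MeasurableSpace X] [OpensMeasurableSpace X]
    {ι : Type*} [Countable ι] {A : ι → Set X} {p : ℝ} (hp : 1 ≤ p) (x₀ : X) (μ ν : Measure X)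
    [IsProbabilityMeasure μ] [IsProbabilityMeasure ν] (hA : ∀ i, MeasurableSet (A i))
    (hdisj : Pairwise (Function.onFun Disjoint A)) {ε : ℝ≥0∞} (hε : ∀ i, ediam (A i) ≤ ε)
    (R : ℝ≥0) {θ : ℝ≥0∞} (hθ : 1 - ∑' i, min (μ (A i)) (ν (A i)) = θ) :
    wCost p μ ν ≤ ε ^ p + 2 ^ (p - 1) * ((R * θ + ∫⁻ x, (edist x₀ x ^ p - R) ∂μ) +
      (R * θ + ∫⁻ x, (edist x₀ x ^ p - R) ∂ν)) := by
  have h₁ := map_fst_cellPlan_le μ ν hA hdisj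
  have h₂ := map_snd_cellPlan_le μ ν hA hdisj
  have := isFiniteMeasure_of_le μ h₁
  have := isFiniteMeasure_of_le ν h₂
  have hθ₁ : (μ - (cellPlan A μ ν).map Prod.fst) univ = θ := by
    rw [Measure.sub_apply .univ h₁, Measure.map_apply measurable_fst .univ, preimage_univ,
      cellPlan_univ, measure_univ, hθ]
  have hθ₂ : (ν - (cellPlan A μ ν).map Prod.snd) univ = θ := by
    rw [Measure.sub_apply .univ h₂, Measure.map_apply measurable_snd .univ, preimage_univ,
      cellPlan_univ, measure_univ, hθ]
  have hmass : cellPlan A μ ν univ ≤ 1 := by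
    rw [← preimage_univ (f := Prod.fst), ← Measure.map_apply measurable_fst .univ]
    exact (h₁ univ).trans prob_le_one
  calc wCost p μ ν ≤ _ := wCost_le_add_of_map_le hp x₀ h₁ h₂
    _ ≤ _ := by
        gcongr
        · exact (transportCost_cellPlan_le (zero_le_one.trans hp) μ ν hA hε).trans
            (mul_le_of_le_one_right zero_le hmass)
        · exact hθ₁ ▸ pthMoment_le_of_le p x₀ Measure.sub_le R
        · exact hθ₂ ▸ pthMoment_le_of_le p x₀ Measure.sub_le R

/-! ### Partitions into cells with null frontier -/

theorem exists_ball_null_frontier_cover [PseudoMetricSpace X] [MeasurableSpace X]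
    [OpensMeasurableSpace X] [TopologicalSpace.SeparableSpace X] [Nonempty X] (μ : Measure X)
    [SFinite μ] {ε : ℝ} (hε : 0 < ε) :
    ∃ (c : ℕ → X) (r : ℕ → ℝ), (∀ i, r i < ε) ∧ (∀ i, μ (frontier (ball (c i) (r i))) = 0) ∧
      ⋃ i, ball (c i) (r i) = univ := by
  have hnull : ∀ x, ∃ r ∈ Ioo (ε / 2) ε, μ (frontier (ball x r)) = 0 := fun x => by
    simpa only [thickening_singleton] using exists_null_frontier_thickening μ {x} (half_lt_self hε)
  choose r hr hμr using hnull
  refine ⟨TopologicalSpace.denseSeq X, fun i => r (TopologicalSpace.denseSeq X i),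
    fun i => (hr _).2, fun i => hμr _, eq_univ_of_forall fun x => ?_⟩
  obtain ⟨i, hi⟩ := (TopologicalSpace.denseRange_denseSeq X).exists_dist_lt x (half_pos hε)
  exact mem_iUnion.2 ⟨i, hi.trans (hr _).1⟩

theorem exists_null_frontier_partition [PseudoMetricSpace X] [MeasurableSpace X]
    [OpensMeasurableSpace X] [TopologicalSpace.SeparableSpace X] [Nonempty X] (μ : Measure X)
    [SFinite μ] {ε : ℝ} (hε : 0 < ε) :
    ∃ A : ℕ → Set X, (∀ i, MeasurableSet (A i)) ∧ Pairwise (Function.onFun Disjoint A) ∧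
      ⋃ i, A i = univ ∧ (∀ i, ediam (A i) ≤ ENNReal.ofReal ε) ∧
      ∀ i, μ (frontier (A i)) = 0 := by
  obtain ⟨c, r, hr, hnull, hcover⟩ := exists_ball_null_frontier_cover μ (half_pos hε)
  refine ⟨disjointed fun i => ball (c i) (r i), .disjointed fun _ => measurableSet_ball,
    disjoint_disjointed _, by rw [iUnion_disjointed, hcover], fun i => ?_, fun i => ?_⟩
  · refine ediam_le_of_forall_dist_le fun x hx y hy => ?_
    have hx' := disjointed_subset _ i hx
    have hy' := disjointed_subset _ i hy
    linarith [dist_triangle_right x y (c i), hr i, mem_ball.1 hx', mem_ball.1 hy']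
  · refine disjointedRec (p := fun s => μ (frontier s) = 0) (fun s j hs => ?_) (hnull i)
    rw [Set.sdiff_eq]
    exact null_frontier_inter hs (by rw [frontier_compl, hnull])

/-! ### Convergence in the Wasserstein space -/

/-- Functions dominated by a multiple of `1 + d(x₀, ·) ^ p`, the test functions for `W_p`. -/
def HasPowerGrowth [PseudoMetricSpace X] (p : ℝ) (x₀ : X) (f : X → ℝ≥0) : Prop :=
  ∃ C : ℝ≥0, ∀ x, f x ≤ C * (1 + nndist x₀ x ^ p)

theorem coe_nndist_rpow [PseudoMetricSpace X] {p : ℝ} (hp : 0 ≤ p) (x₀ x : X) :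
    ((nndist x₀ x ^ p : ℝ≥0) : ℝ≥0∞) = edist x₀ x ^ p := by
  rw [edist_nndist, ENNReal.coe_rpow_of_nonneg _ hp]

theorem lintegral_mul_one_add_nndist_rpow [PseudoMetricSpace X] [MeasurableSpace X]
    [OpensMeasurableSpace X] {p : ℝ} (hp : 0 ≤ p) (x₀ : X) (C : ℝ≥0) (μ : Measure X)
    [IsProbabilityMeasure μ] :
    ∫⁻ x, (C * (1 + nndist x₀ x ^ p) : ℝ≥0) ∂μ = C * (1 + pthMoment p x₀ μ) := by
  simp only [ENNReal.coe_mul, ENNReal.coe_add, ENNReal.coe_one, coe_nndist_rpow hp]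
  rw [lintegral_const_mul _ (by fun_prop), lintegral_add_left measurable_const, lintegral_one,
    measure_univ, pthMoment]

theorem tendsto_of_le_liminf_of_tendsto_add {ι : Type*} {l : Filter ι} [l.NeBot]
    {u v : ι → ℝ≥0∞} {a b : ℝ≥0∞} (hb : b ≠ ⊤) (hu : a ≤ liminf u l) (hv : b ≤ liminf v l)
    (huv : Tendsto (fun i => u i + v i) l (𝓝 (a + b))) : Tendsto u l (𝓝 a) := by
  have hdefect : Tendsto (fun i => b - v i) l (𝓝 0) :=
    tendsto_of_le_liminf_of_limsup_le zero_le
      (by rw [ENNReal.limsup_const_sub _ _ hb, tsub_eq_zero_of_le hv])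
  refine tendsto_of_le_liminf_of_limsup_le hu (ENNReal.le_of_add_le_add_right hb ?_)
  calc limsup u l + b = limsup (fun i => u i + b) l := by
        rw [limsup_add_const l u b (by isBoundedDefault) (by isBoundedDefault)]
    _ ≤ limsup (fun i => u i + v i + (b - v i)) l :=
        limsup_le_limsup (.of_forall fun i => by
          dsimp only
          rw [add_assoc]
          gcongr
          exact le_add_tsub)
    _ = a + b := by simpa using (huv.add hdefect).limsup_eq

section WeakConvergence

variable [MeasurableSpace X] [TopologicalSpace X] [OpensMeasurableSpace X]
  [HasOuterApproxClosed X] {μs : ℕ → ProbabilityMeasure X} {μ : ProbabilityMeasure X}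

theorem lintegral_le_liminf_lintegral_of_tendsto (h : Tendsto μs atTop (𝓝 μ)) {f : X → ℝ≥0}
    (hf : Continuous f) : ∫⁻ x, f x ∂μ ≤ liminf (fun n => ∫⁻ x, f x ∂(μs n : Measure X)) atTop := by
  simpa only [ENNReal.ofReal_coe_nnreal] using
    lintegral_le_liminf_lintegral_of_forall_isOpen_measure_le_liminf_measure
      (f := fun x => (f x : ℝ)) (by fun_prop) (fun x => (f x).2) fun G hG =>
        ProbabilityMeasure.le_liminf_measure_open_of_tendsto h hG

/-- Both `f` and `B - f` are weakly lower semicontinuous, and the integrals of their sum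
converge. -/
theorem tendsto_lintegral_of_le_of_tendsto_lintegral (h : Tendsto μs atTop (𝓝 μ))
    {f B : X → ℝ≥0} (hf : Continuous f) (hB : Continuous B) (hfB : f ≤ B)
    (hfin : ∫⁻ x, B x ∂(μ : Measure X) ≠ ⊤)
    (hlim : Tendsto (fun n => ∫⁻ x, B x ∂(μs n : Measure X)) atTop (𝓝 (∫⁻ x, B x ∂μ))) :
    Tendsto (fun n => ∫⁻ x, f x ∂(μs n : Measure X)) atTop (𝓝 (∫⁻ x, f x ∂μ)) := by
  have hsum (ν : Measure X) : ∫⁻ x, f x ∂ν + ∫⁻ x, (B x - f x : ℝ≥0) ∂ν = ∫⁻ x, B x ∂ν := by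
    rw [← lintegral_add_left (by fun_prop)]
    simp only [← ENNReal.coe_add, add_tsub_cancel_of_le (hfB _)]
  refine tendsto_of_le_liminf_of_tendsto_add (ne_top_of_le_ne_top hfin ?_)
    (lintegral_le_liminf_lintegral_of_tendsto h hf)
    (lintegral_le_liminf_lintegral_of_tendsto h (f := fun x => B x - f x)
      (hB.sub hf)) ?_
  · exact (hsum μ).le.trans' le_add_self
  · simpa only [hsum] using hlim

theorem tendsto_tsum_min_measure (h : Tendsto μs atTop (𝓝 μ)) {A : ℕ → Set X}
    (hA : ∀ i, MeasurableSet (A i)) (hdisj : Pairwise (Function.onFun Disjoint A))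
    (hcover : ⋃ i, A i = univ) (hnull : ∀ i, (μ : Measure X) (frontier (A i)) = 0) :
    Tendsto (fun n => ∑' i, min ((μs n : Measure X) (A i)) ((μ : Measure X) (A i))) atTop
      (𝓝 1) := by
  have hmass : ∑' i, (μ : Measure X) (A i) = 1 := by
    rw [← measure_iUnion hdisj hA, hcover, measure_univ]
  simp only [← hmass, ← lintegral_count]
  refine tendsto_lintegral_of_dominated_convergence (fun i => (μ : Measure X) (A i))
    (fun n => measurable_from_nat) (fun n => .of_forall fun i => min_le_right _ _) ?_
    (.of_forall fun i => ?_)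
  · rw [lintegral_count, hmass]
    exact ENNReal.one_ne_top
  · simpa only [min_self] using
      (ProbabilityMeasure.tendsto_measure_of_null_frontier_of_tendsto' h (hnull i)).min
        (tendsto_const_nhds (x := (μ : Measure X) (A i)))

end WeakConvergence

section PowerGrowth

variable [PseudoMetricSpace X] [MeasurableSpace X] [OpensMeasurableSpace X] {p : ℝ}
  {μs : ℕ → ProbabilityMeasure X} {μ : ProbabilityMeasure X} {x₀ : X}

theorem tendsto_lintegral_of_hasPowerGrowth (hp : 0 ≤ p)
    (h : Tendsto μs atTop (𝓝 μ)) (hfin : pthMoment p x₀ (μ : Measure X) ≠ ⊤)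
    (hmom : Tendsto (fun n => pthMoment p x₀ (μs n)) atTop (𝓝 (pthMoment p x₀ μ)))
    {f : X → ℝ≥0} (hf : Continuous f) (hgrowth : HasPowerGrowth p x₀ f) :
    Tendsto (fun n => ∫⁻ x, f x ∂(μs n : Measure X)) atTop (𝓝 (∫⁻ x, f x ∂μ)) := by
  obtain ⟨C, hC⟩ := hgrowth
  refine tendsto_lintegral_of_le_of_tendsto_lintegral h hf
    (B := fun x => C * (1 + nndist x₀ x ^ p)) (by fun_prop (disch := exact hp)) hC ?_ ?_
  · rw [lintegral_mul_one_add_nndist_rpow hp]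
    finiteness
  · simp only [lintegral_mul_one_add_nndist_rpow hp]
    exact ENNReal.Tendsto.const_mul (hmom.const_add 1) (Or.inr ENNReal.coe_ne_top)

theorem tendsto_lintegral_edist_rpow_sub_natCast (hp : 0 ≤ p)
    {ν : Measure X} (hfin : pthMoment p x₀ ν ≠ ⊤) :
    Tendsto (fun R : ℕ => ∫⁻ x, (edist x₀ x ^ p - R) ∂ν) atTop (𝓝 0) := by
  rw [← lintegral_zero (μ := ν)]
  refine tendsto_lintegral_of_dominated_convergence (fun x => edist x₀ x ^ p) (fun R => ?_)
    (fun R => .of_forall fun x => tsub_le_self) hfin (.of_forall fun x => ?_)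
  · fun_prop
  · have hne : edist x₀ x ^ p ≠ ⊤ := by finiteness
    simpa only [ENNReal.sub_top] using
      ENNReal.Tendsto.sub tendsto_const_nhds ENNReal.tendsto_nat_nhds_top (Or.inl hne)

theorem tendsto_lintegral_edist_rpow_sub (hp : 0 ≤ p)
    (h : Tendsto μs atTop (𝓝 μ)) (hfin : pthMoment p x₀ (μ : Measure X) ≠ ⊤)
    (hmom : Tendsto (fun n => pthMoment p x₀ (μs n)) atTop (𝓝 (pthMoment p x₀ μ))) (R : ℝ≥0) :
    Tendsto (fun n => ∫⁻ x, (edist x₀ x ^ p - R) ∂(μs n : Measure X)) atTop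
      (𝓝 (∫⁻ x, (edist x₀ x ^ p - R) ∂μ)) := by
  simpa only [ENNReal.coe_sub, coe_nndist_rpow hp] using
    tendsto_lintegral_of_hasPowerGrowth hp h hfin hmom (f := fun x => nndist x₀ x ^ p - R)
      (by fun_prop (disch := exact hp))
      ⟨1, fun x => tsub_le_self.trans (by rw [one_mul]; exact le_add_self)⟩

end PowerGrowth

section WassersteinConvergence

variable [MetricSpace X] [MeasurableSpace X] {p : ℝ} {μs : ℕ → ProbabilityMeasure X}
  {μ : ProbabilityMeasure X} {x₀ : X}

theorem tendsto_of_tendsto_wCost [OpensMeasurableSpace X] [SecondCountableTopology X] (hp : 1 ≤ p)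
    (h : Tendsto (fun n => wCost p (μs n : Measure X) μ) atTop (𝓝 0)) :
    Tendsto μs atTop (𝓝 μ) := by
  have hroot : Tendsto (fun n => wCost p (μs n : Measure X) μ ^ (1 / p)) atTop (𝓝 0) := by
    simpa only [ENNReal.zero_rpow_of_pos (one_div_pos.2 (zero_lt_one.trans_le hp))] using
      h.ennrpow_const (1 / p)
  refine tendsto_iff_forall_lipschitz_integral_tendsto.2 fun f ⟨C, hC⟩ ⟨L, hf⟩ => ?_
  have hint (ν : ProbabilityMeasure X) : Integrable f ν :=
    BoundedContinuousFunction.integrable (ν : Measure X) (.mkOfBound ⟨f, hf.continuous⟩ C hC)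
  have hbound : Tendsto (fun n => L * wCost p (μs n : Measure X) μ ^ (1 / p)) atTop (𝓝 0) := by
    simpa only [mul_zero] using ENNReal.Tendsto.const_mul hroot (Or.inr ENNReal.coe_ne_top)
  exact tendsto_iff_edist_tendsto_0.2 (tendsto_of_tendsto_of_tendsto_of_le_of_le
    tendsto_const_nhds hbound (fun _ => zero_le) fun n =>
      edist_integral_le_mul_rpow_wCost hp hf (hint _) (hint _))

theorem tendsto_pthMoment_of_tendsto_wCost [OpensMeasurableSpace X] [SecondCountableTopology X]
    (hp : 1 ≤ p) (h : Tendsto (fun n => wCost p (μs n : Measure X) μ) atTop (𝓝 0)) :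
    Tendsto (fun n => pthMoment p x₀ (μs n)) atTop (𝓝 (pthMoment p x₀ μ)) := by
  have hp0 : 0 < p := zero_lt_one.trans_le hp
  have hroot : Tendsto (fun n => pthMoment p x₀ (μ : Measure X) ^ (1 / p) +
      wCost p (μs n : Measure X) μ ^ (1 / p)) atTop (𝓝 (pthMoment p x₀ μ ^ (1 / p))) := by
    simpa only [ENNReal.zero_rpow_of_pos (one_div_pos.2 hp0), add_zero] using
      (h.ennrpow_const (1 / p)).const_add (pthMoment p x₀ (μ : Measure X) ^ (1 / p))
  have hupper := hroot.ennrpow_const p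
  simp only [← ENNReal.rpow_mul, one_div_mul_cancel hp0.ne', ENNReal.rpow_one] at hupper
  have hbound (n : ℕ) : pthMoment p x₀ (μs n : Measure X) ≤
      (pthMoment p x₀ (μ : Measure X) ^ (1 / p) + wCost p (μs n : Measure X) μ ^ (1 / p)) ^ p :=
    (ENNReal.rpow_inv_le_iff hp0).1
      (one_div p ▸ rpow_pthMoment_le_add_rpow_wCost hp x₀)
  refine tendsto_of_le_liminf_of_limsup_le ?_
    ((limsup_le_limsup (.of_forall hbound)).trans_eq hupper.limsup_eq)
  simpa only [pthMoment, coe_nndist_rpow hp0.le] using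
    lintegral_le_liminf_lintegral_of_tendsto (tendsto_of_tendsto_wCost hp h)
      (f := fun x => nndist x₀ x ^ p) (by fun_prop (disch := exact hp0.le))

theorem limsup_wCost_le [OpensMeasurableSpace X] [TopologicalSpace.SeparableSpace X] (hp : 1 ≤ p)
    (h : Tendsto μs atTop (𝓝 μ)) (hfin : pthMoment p x₀ (μ : Measure X) ≠ ⊤)
    (hmom : Tendsto (fun n => pthMoment p x₀ (μs n)) atTop (𝓝 (pthMoment p x₀ μ)))
    {ε : ℝ} (hε : 0 < ε) (R : ℝ≥0) :
    limsup (fun n => wCost p (μs n : Measure X) μ) atTop ≤ ENNReal.ofReal ε ^ p +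
      2 ^ (p - 1) * (∫⁻ x, (edist x₀ x ^ p - R) ∂μ + ∫⁻ x, (edist x₀ x ^ p - R) ∂μ) := by
  have : Nonempty X := ⟨x₀⟩
  have hp0 : 0 ≤ p := zero_le_one.trans hp
  obtain ⟨A, hA, hdisj, hcover, hdiam, hnull⟩ :=
    exists_null_frontier_partition (μ : Measure X) hε
  have hunshared : Tendsto
      (fun n => 1 - ∑' i, min ((μs n : Measure X) (A i)) ((μ : Measure X) (A i))) atTop (𝓝 0) := by
    simpa only [tsub_self] using ENNReal.Tendsto.sub tendsto_const_nhds
      (tendsto_tsum_min_measure h hA hdisj hcover hnull) (Or.inl ENNReal.one_ne_top)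
  have hcentre : Tendsto (fun n =>
      R * (1 - ∑' i, min ((μs n : Measure X) (A i)) ((μ : Measure X) (A i)))) atTop (𝓝 0) := by
    simpa only [mul_zero] using ENNReal.Tendsto.const_mul hunshared (Or.inr ENNReal.coe_ne_top)
  have hbound := (ENNReal.Tendsto.const_mul (a := 2 ^ (p - 1))
    ((hcentre.add (tendsto_lintegral_edist_rpow_sub hp0 h hfin hmom R)).add
      (hcentre.add_const (∫⁻ x, (edist x₀ x ^ p - R) ∂(μ : Measure X))))
    (Or.inr (by finiteness))).const_add (ENNReal.ofReal ε ^ p)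
  rw [zero_add] at hbound
  exact hbound.limsup_eq ▸ limsup_le_limsup (.of_forall fun n =>
    wCost_le_of_disjoint_cells hp x₀ _ _ hA hdisj hdiam R rfl)

theorem tendsto_wCost_of_tendsto_of_tendsto_pthMoment [OpensMeasurableSpace X]
    [TopologicalSpace.SeparableSpace X] (hp : 1 ≤ p) (h : Tendsto μs atTop (𝓝 μ))
    (hfin : pthMoment p x₀ (μ : Measure X) ≠ ⊤)
    (hmom : Tendsto (fun n => pthMoment p x₀ (μs n)) atTop (𝓝 (pthMoment p x₀ μ))) :
    Tendsto (fun n => wCost p (μs n : Measure X) μ) atTop (𝓝 0) := by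
  have hp0 : 0 < p := zero_lt_one.trans_le hp
  have htail := tendsto_lintegral_edist_rpow_sub_natCast hp0.le hfin
  have hmesh : Tendsto (fun n : ℕ => ENNReal.ofReal (1 / ((n : ℝ) + 1)) ^ p) atTop (𝓝 0) := by
    simpa only [ENNReal.ofReal_zero, ENNReal.zero_rpow_of_pos hp0] using
      (ENNReal.tendsto_ofReal tendsto_one_div_add_atTop_nhds_zero_nat).ennrpow_const p
  have hbound := hmesh.add (ENNReal.Tendsto.const_mul (a := 2 ^ (p - 1)) (htail.add htail)
    (Or.inr (by finiteness)))
  simp only [add_zero, mul_zero] at hbound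
  refine tendsto_of_le_liminf_of_limsup_le zero_le
    (ge_of_tendsto' hbound fun n => ?_)
  exact_mod_cast limsup_wCost_le hp h hfin hmom (by positivity : (0 : ℝ) < 1 / ((n : ℝ) + 1)) n

theorem tendsto_wCost_iff_forall_lintegral_tendsto [OpensMeasurableSpace X]
    [SecondCountableTopology X] (hp : 1 ≤ p) (hfin : pthMoment p x₀ (μ : Measure X) ≠ ⊤) :
    Tendsto (fun n => wCost p (μs n : Measure X) μ) atTop (𝓝 0) ↔
      ∀ f : X → ℝ≥0, Continuous f → HasPowerGrowth p x₀ f →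
        Tendsto (fun n => ∫⁻ x, f x ∂(μs n : Measure X)) atTop (𝓝 (∫⁻ x, f x ∂μ)) := by
  have hp0 : 0 ≤ p := zero_le_one.trans hp
  refine ⟨fun h f hf hgrowth => ?_, fun h => ?_⟩
  · exact tendsto_lintegral_of_hasPowerGrowth hp0 (tendsto_of_tendsto_wCost hp h) hfin
      (tendsto_pthMoment_of_tendsto_wCost hp h) hf hgrowth
  · refine tendsto_wCost_of_tendsto_of_tendsto_pthMoment hp
      (ProbabilityMeasure.tendsto_iff_forall_lintegral_tendsto.2 fun f => ?_) hfin ?_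
    · exact h f f.continuous ⟨nndist f 0, fun x =>
        (BoundedContinuousFunction.NNReal.upper_bound f x).trans (le_mul_of_one_le_right zero_le
          le_self_add)⟩
    · simpa only [pthMoment, coe_nndist_rpow hp0] using
        h (fun x => nndist x₀ x ^ p) (by fun_prop (disch := exact hp0))
          ⟨1, fun x => by rw [one_mul]; exact le_add_self⟩

end WassersteinConvergence

section Wp

variable [MetricSpace X] [MeasurableSpace X] {p : ℝ}

theorem Wp_le_iff (hp : 0 < p) {μ ν : Measure X} (h : wCost p μ ν ≠ ⊤) {M : ℝ} (hM : 0 ≤ M) :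
    Wp p μ ν ≤ M ↔ wCost p μ ν ≤ ENNReal.ofReal M ^ p := by
  rw [Wp, ← ENNReal.le_ofReal_iff_toReal_le (by finiteness) hM, one_div,
    ENNReal.rpow_inv_le_iff hp]

theorem wpTendsto_iff_tendsto_wCost [OpensMeasurableSpace X] (hp : 1 ≤ p) {x₀ : X}
    {μs : ℕ → Measure X} {μ : Measure X} (hμs : ∀ n, μs n ∈ Pp p x₀) (hμ : μ ∈ Pp p x₀) :
    WpTendsto p μs μ ↔ Tendsto (fun n => wCost p (μs n) μ) atTop (𝓝 0) := by
  have hp0 : 0 < p := zero_lt_one.trans_le hp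
  have hfin (n : ℕ) := wCost_ne_top hp (hμs n) hμ
  rw [WpTendsto, ← ENNReal.toReal_zero]
  simp only [Wp]
  rw [ENNReal.tendsto_toReal_iff (fun n => by have := hfin n; finiteness) ENNReal.zero_ne_top]
  refine ⟨fun h => ?_, fun h => ?_⟩
  · simpa only [← ENNReal.rpow_mul, one_div_mul_cancel hp0.ne', ENNReal.rpow_one,
      ENNReal.zero_rpow_of_pos hp0] using h.ennrpow_const p
  · simpa only [ENNReal.zero_rpow_of_pos (one_div_pos.2 hp0)] using h.ennrpow_const (1 / p)

theorem wpTendsto_iff_forall_lintegral_tendsto [OpensMeasurableSpace X]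
    [SecondCountableTopology X] (hp : 1 ≤ p) {x₀ : X} {μs : ℕ → Measure X} {μ : Measure X}
    (hμs : ∀ n, μs n ∈ Pp p x₀) (hμ : μ ∈ Pp p x₀) :
    WpTendsto p μs μ ↔ ∀ f : X → ℝ≥0, Continuous f → HasPowerGrowth p x₀ f →
      Tendsto (fun n => ∫⁻ x, f x ∂μs n) atTop (𝓝 (∫⁻ x, f x ∂μ)) := by
  rw [wpTendsto_iff_tendsto_wCost hp hμs hμ]
  exact tendsto_wCost_iff_forall_lintegral_tendsto (μs := fun n => ⟨μs n, (hμs n).1⟩)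
    (μ := ⟨μ, hμ.1⟩) hp (pthMoment_ne_top_of_mem_Pp (zero_le_one.trans hp) hμ)

end Wp

/-! ### Kernels of bounded displacement -/

section Kernel

open ProbabilityTheory

theorem bind_mix [MeasurableSpace X] (q : Kernel X X) (t : ℝ) (μ ν : Measure X) :
    (mix t μ ν).bind q = mix t (μ.bind q) (ν.bind q) := by
  rw [mix, mix, Measure.comp_add, Measure.comp_smul, Measure.comp_smul]

theorem isCoupling_map_swap_compProd [MeasurableSpace X] (μ : Measure X) [SFinite μ]
    (q : Kernel X X) [IsMarkovKernel q] :
    IsCoupling ((μ ⊗ₘ q).map Prod.swap) (μ.bind q) μ := by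
  constructor
  · rw [Measure.map_map measurable_fst measurable_swap]
    exact Measure.snd_compProd μ q
  · rw [Measure.map_map measurable_snd measurable_swap]
    exact Measure.fst_compProd μ q

theorem pthMoment_le_mul_add [PseudoEMetricSpace X] [MeasurableSpace X] [OpensMeasurableSpace X]
    {p : ℝ} (hp : 1 ≤ p) (x₀ x : X) (μ : Measure X) [IsProbabilityMeasure μ] :
    pthMoment p x₀ μ ≤ 2 ^ (p - 1) * (edist x₀ x ^ p + pthMoment p x μ) :=
  calc pthMoment p x₀ μ
      ≤ ∫⁻ y, 2 ^ (p - 1) * (edist x x₀ ^ p + edist x y ^ p) ∂μ :=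
        lintegral_mono fun y => edist_rpow_le_mul_add hp x x₀ y
    _ = 2 ^ (p - 1) * (edist x₀ x ^ p + pthMoment p x μ) := by
        rw [lintegral_const_mul _ (by fun_prop), lintegral_add_left measurable_const,
          lintegral_const, measure_univ, mul_one, edist_comm, pthMoment]

theorem lintegral_le_of_le_mul_one_add_nndist_rpow [PseudoMetricSpace X] [MeasurableSpace X]
    [OpensMeasurableSpace X] {p : ℝ} (hp : 1 ≤ p) {x₀ x : X} {c : ℝ≥0} {ν : Measure X}
    [IsProbabilityMeasure ν] (hc : pthMoment p x ν ≤ c) {f : X → ℝ≥0} {C : ℝ≥0}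
    (hC : ∀ y, f y ≤ C * (1 + nndist x₀ y ^ p)) :
    ∫⁻ y, f y ∂ν ≤ (C * (1 + 2 ^ (p - 1) * (1 + c)) * (1 + nndist x₀ x ^ p) : ℝ≥0) := by
  have hp0 : 0 ≤ p := zero_le_one.trans hp
  have harith (a d : ℝ≥0) : 1 + a * (d + c) ≤ (1 + a * (1 + c)) * (1 + d) :=
    calc 1 + a * (d + c) ≤ 1 + a * (d + c) + (d + a + a * c * d) := le_self_add
      _ = (1 + a * (1 + c)) * (1 + d) := by ring
  have hmoment : pthMoment p x₀ ν ≤ (2 ^ (p - 1) * (nndist x₀ x ^ p + c) : ℝ≥0) := by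
    push_cast [coe_nndist_rpow hp0, ENNReal.coe_rpow_of_nonneg _ (sub_nonneg.2 hp)]
    grw [pthMoment_le_mul_add hp x₀ x, hc]
  calc ∫⁻ y, f y ∂ν ≤ ∫⁻ y, (C * (1 + nndist x₀ y ^ p) : ℝ≥0) ∂ν :=
        lintegral_mono fun y => ENNReal.coe_le_coe.2 (hC y)
    _ = C * (1 + pthMoment p x₀ ν) := lintegral_mul_one_add_nndist_rpow hp0 x₀ C ν
    _ ≤ (C * (1 + 2 ^ (p - 1) * (nndist x₀ x ^ p + c)) : ℝ≥0) := by
        push_cast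
        grw [hmoment]
        push_cast
        rfl
    _ ≤ _ := by
        rw [mul_assoc]
        gcongr
        exact harith (2 ^ (p - 1)) (nndist x₀ x ^ p)

variable [MetricSpace X] [MeasurableSpace X] [OpensMeasurableSpace X] {p : ℝ}

theorem dirac_mem_Pp (hp : 0 ≤ p) (x₀ x : X) : Measure.dirac x ∈ Pp p x₀ := by
  refine ⟨inferInstance, (finiteMoment_iff_pthMoment_lt_top hp).2 ?_⟩
  rw [pthMoment, lintegral_dirac' _ (by fun_prop)]
  finiteness

variable [SecondCountableTopology X] {x₀ : X} {q : Kernel X X} [IsMarkovKernel q]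
  {c : ℝ≥0}

theorem wCost_bind_le (hp : 0 ≤ p) (hc : ∀ x, pthMoment p x (q x) ≤ c) (μ : Measure X)
    [IsProbabilityMeasure μ] : wCost p (μ.bind q) μ ≤ c := by
  have hm : Measurable fun z : X × X => edist z.1 z.2 ^ p := by fun_prop
  calc wCost p (μ.bind q) μ
      ≤ transportCost p ((μ ⊗ₘ q).map Prod.swap) :=
        (isCoupling_map_swap_compProd μ q).wCost_le hp
    _ = ∫⁻ x, pthMoment p x (q x) ∂μ := by
        rw [transportCost, lintegral_map hm measurable_swap,
          Measure.lintegral_compProd (by fun_prop)]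
        simp only [pthMoment, Prod.fst_swap, Prod.snd_swap, edist_comm]
    _ ≤ ∫⁻ _, c ∂μ := lintegral_mono hc
    _ = c := by rw [lintegral_const, measure_univ, mul_one]

theorem bind_mem_Pp (hp : 1 ≤ p) (hc : ∀ x, pthMoment p x (q x) ≤ c) {μ : Measure X}
    (hμ : μ ∈ Pp p x₀) : μ.bind q ∈ Pp p x₀ := by
  have := hμ.1
  have hp0 : 0 < p := zero_lt_one.trans_le hp
  have hmoment := pthMoment_ne_top_of_mem_Pp hp0.le hμ
  have hcost := ne_top_of_le_ne_top ENNReal.coe_ne_top (wCost_bind_le hp0.le hc μ)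
  refine ⟨inferInstance, (finiteMoment_iff_pthMoment_lt_top hp0.le).2 ?_⟩
  rw [← ENNReal.rpow_lt_top_iff_of_pos (one_div_pos.2 hp0)]
  exact (rpow_pthMoment_le_add_rpow_wCost hp x₀).trans_lt (by finiteness)

theorem exists_continuous_hasPowerGrowth_eq_lintegral (hp : 1 ≤ p)
    (hq_mem : ∀ x, q x ∈ Pp p x₀)
    (hq_cont : ∀ (xs : ℕ → X) (x : X), Tendsto xs atTop (𝓝 x) →
      WpTendsto p (fun n => q (xs n)) (q x))
    (hc : ∀ x, pthMoment p x (q x) ≤ c) {f : X → ℝ≥0} (hf : Continuous f)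
    (hgrowth : HasPowerGrowth p x₀ f) :
    ∃ F : X → ℝ≥0, Continuous F ∧ HasPowerGrowth p x₀ F ∧ ∀ x, (F x : ℝ≥0∞) = ∫⁻ y, f y ∂q x := by
  obtain ⟨C, hC⟩ := hgrowth
  have hbound (x : X) := lintegral_le_of_le_mul_one_add_nndist_rpow hp (hc x) hC
  have hfin (x : X) := ne_top_of_le_ne_top ENNReal.coe_ne_top (hbound x)
  refine ⟨fun x => (∫⁻ y, f y ∂q x).toNNReal, continuous_iff_seqContinuous.2 fun xs x hx => ?_,
    ⟨_, fun x => ENNReal.toNNReal_mono ENNReal.coe_ne_top (hbound x)⟩,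
    fun x => ENNReal.coe_toNNReal (hfin x)⟩
  exact (ENNReal.tendsto_toNNReal (hfin x)).comp
    ((wpTendsto_iff_forall_lintegral_tendsto hp (fun n => hq_mem (xs n)) (hq_mem x)).1
      (hq_cont xs x hx) f hf ⟨C, hC⟩)

theorem wpTendsto_bind (hp : 1 ≤ p) (hq_mem : ∀ x, q x ∈ Pp p x₀)
    (hq_cont : ∀ (xs : ℕ → X) (x : X), Tendsto xs atTop (𝓝 x) →
      WpTendsto p (fun n => q (xs n)) (q x))
    (hc : ∀ x, pthMoment p x (q x) ≤ c) {μs : ℕ → Measure X} {μ : Measure X}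
    (hμs : ∀ n, μs n ∈ Pp p x₀) (hμ : μ ∈ Pp p x₀) (h : WpTendsto p μs μ) :
    WpTendsto p (fun n => (μs n).bind q) (μ.bind q) := by
  rw [wpTendsto_iff_forall_lintegral_tendsto hp hμs hμ] at h
  refine (wpTendsto_iff_forall_lintegral_tendsto hp (fun n => bind_mem_Pp hp hc (hμs n))
    (bind_mem_Pp hp hc hμ)).2 fun f hf hgrowth => ?_
  obtain ⟨F, hF, hFgrowth, hFeq⟩ :=
    exists_continuous_hasPowerGrowth_eq_lintegral hp hq_mem hq_cont hc hf hgrowth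
  have hduality (ν : Measure X) : ∫⁻ y, f y ∂ν.bind q = ∫⁻ x, F x ∂ν := by
    simp only [hFeq, Measure.lintegral_bind q.aemeasurable
      hf.measurable.coe_nnreal_ennreal.aemeasurable]
  simpa only [hduality] using h F hF hFgrowth

end Kernel

theorem kernel_induces_MW_map_of_identity_general
    [MetricSpace X] [MeasurableSpace X] [BorelSpace X] [TopologicalSpace.SeparableSpace X]
    (p : ℝ) (hp : 1 ≤ p) (x₀ : X) (q : ProbabilityTheory.Kernel X X)
    (hq_mem : ∀ x : X, (q x : Measure X) ∈ Pp p x₀)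
    (hq_cont : ∀ (xs : ℕ → X) (x : X), Tendsto xs atTop (𝓝 x) →
      Tendsto (fun n => Wp p (q (xs n)) (q x)) atTop (𝓝 0))
    (M : ℝ) (hM : ∀ x : X, Wp p (q x) (Measure.dirac x) ≤ M) :
    (∀ μ ∈ Pp p x₀, μ.bind (fun x => q x) ∈ Pp p x₀) ∧
    (∀ (μs : ℕ → Measure X) (μ : Measure X), (∀ n, μs n ∈ Pp p x₀) → μ ∈ Pp p x₀ →
      WpTendsto p μs μ →
      WpTendsto p (fun n => (μs n).bind (fun x => q x)) (μ.bind (fun x => q x))) ∧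
    (∀ t : ℝ, 0 ≤ t → t ≤ 1 → ∀ μ ∈ Pp p x₀, ∀ ν ∈ Pp p x₀,
      (mix t μ ν).bind (fun x => q x) = mix t (μ.bind (fun x => q x)) (ν.bind (fun x => q x))) ∧
    (∀ μ ∈ Pp p x₀, Wp p (μ.bind (fun x => q x)) μ ≤ M) := by
  have hp0 : 0 < p := zero_lt_one.trans_le hp
  have hM0 : 0 ≤ M := ENNReal.toReal_nonneg.trans (hM x₀)
  have := UniformSpace.secondCountable_of_separable X
  have : ProbabilityTheory.IsMarkovKernel q := ⟨fun x => (hq_mem x).1⟩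
  have hc (x : X) : pthMoment p x (q x) ≤ (M.toNNReal ^ p : ℝ≥0) := by
    rw [ENNReal.coe_rpow_of_nonneg _ hp0.le]
    exact (pthMoment_le_wCost_dirac hp x).trans
      ((Wp_le_iff hp0 (wCost_ne_top hp (hq_mem x) (dirac_mem_Pp hp0.le x₀ x)) hM0).1 (hM x))
  refine ⟨fun μ hμ => bind_mem_Pp hp hc hμ,
    fun μs μ hμs hμ h => wpTendsto_bind hp hq_mem hq_cont hc hμs hμ h,
    fun t _ _ μ _ ν _ => bind_mix q t μ ν, fun μ hμ => ?_⟩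
  have := hμ.1
  rw [Wp_le_iff hp0 (wCost_ne_top hp (bind_mem_Pp hp hc hμ) hμ) hM0]
  exact (wCost_bind_le hp0.le hc μ).trans_eq (ENNReal.coe_rpow_of_nonneg _ hp0.le)

/-- A continuous Markov kernel `q : X → P_p(X)` with `sup_x w_p(q(x), δ_x) = M < ∞` induces
an MW-map of order `p` relative to the identity with noise level `M`: the induced map
`P(μ) = ∫ q(x) dμ(x)` maps `P_p(X)` into itself, is `w_p`-continuous, convex linear, and
satisfies `w_p(P(μ), μ) ≤ M`. -/
theorem kernel_induces_MW_map_of_identity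
    [MetricSpace X] [MeasurableSpace X] [BorelSpace X] [ProperSpace X] [CompleteSpace X]
    [TopologicalSpace.SeparableSpace X]
    (p : ℝ) (hp : 1 ≤ p) (x₀ : X)
    (q : ProbabilityTheory.Kernel X X) [ProbabilityTheory.IsMarkovKernel q]
    (hq_mem : ∀ x : X, (q x : Measure X) ∈ Pp p x₀)
    (hq_cont : ∀ (xs : ℕ → X) (x : X), Tendsto xs atTop (𝓝 x) →
      Tendsto (fun n => Wp p (q (xs n)) (q x)) atTop (𝓝 0))
    (M : ℝ) (hM : ∀ x : X, Wp p (q x) (Measure.dirac x) ≤ M) :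
    (∀ μ ∈ Pp p x₀, μ.bind (fun x => q x) ∈ Pp p x₀) ∧
    (∀ (μs : ℕ → Measure X) (μ : Measure X), (∀ n, μs n ∈ Pp p x₀) → μ ∈ Pp p x₀ →
      WpTendsto p μs μ →
      WpTendsto p (fun n => (μs n).bind (fun x => q x)) (μ.bind (fun x => q x))) ∧
    (∀ t : ℝ, 0 ≤ t → t ≤ 1 → ∀ μ ∈ Pp p x₀, ∀ ν ∈ Pp p x₀,
      (mix t μ ν).bind (fun x => q x) = mix t (μ.bind (fun x => q x)) (ν.bind (fun x => q x))) ∧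
    (∀ μ ∈ Pp p x₀, Wp p (μ.bind (fun x => q x)) μ ≤ M) := by
  exact kernel_induces_MW_map_of_identity_general p hp x₀ q hq_mem hq_cont M hM
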